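/- Let G be a connected graph of bounded degree d on n vertices. Then there exists a connected graph Ĝ on O(n²) vertices, containing G as an induced subgraph, such that Ĝ has a cycle basis in which every cycle has length at most 4 and every edge of Ĝ belongs to at most 4 cycles of the basis. -/

import Mathlib

/-- `x : Sym2 V → ZMod 2` is the edge-indicator vector of a cycle of `G`. -/
def IsCycleVec {V : Type*} [DecidableEq V] (G : SimpleGraph V) (x : Sym2 V → ZMod 2) : Prop :=
  ∃ (v : V) (w : G.Walk v v), w.IsCycle ∧ ∀ e, x e = if e ∈ w.edges then 1 else 0

/-- The cycle space of `G` over GF(2): the span of the indicator vectors of cycles. -/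
noncomputable def cycleSpace {V : Type*} [DecidableEq V] (G : SimpleGraph V) :
    Submodule (ZMod 2) (Sym2 V → ZMod 2) :=
  Submodule.span (ZMod 2) {x | IsCycleVec G x}

section SparseCycleBasis

open Finset

/-- The GF(2) indicator vector of a single edge. -/
def edgeVec {V : Type*} [DecidableEq V] (a b : V) : Sym2 V → ZMod 2 :=
  Pi.single s(a, b) 1

/-- The GF(2) sum of the edge vectors of a list of edges. -/
def edgeListVec {V : Type*} [DecidableEq V] (l : List (Sym2 V)) : Sym2 V → ZMod 2 :=
  (l.map fun e => Pi.single e 1).sum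

/-- The sum of the three edge vectors of the triangle on `a`, `b` and `c`. -/
def triangleVec {V : Type*} [DecidableEq V] (c a b : V) : Sym2 V → ZMod 2 :=
  edgeVec c a + edgeVec a b + edgeVec c b

section General

variable {V : Type*} [DecidableEq V]

lemma zmod_two_add_self {κ : Type*} (x : κ → ZMod 2) : x + x = 0 :=
  funext fun _ => CharTwo.add_self_eq_zero _

lemma edgeVec_comm (a b : V) : edgeVec a b = edgeVec b a := by
  rw [edgeVec, edgeVec, Sym2.eq_swap]

lemma edgeListVec_apply {l : List (Sym2 V)} (hl : l.Nodup) (e : Sym2 V) :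
    edgeListVec l e = if e ∈ l then 1 else 0 := by
  induction l with
  | nil => simp [edgeListVec]
  | cons a l ih =>
    rw [List.nodup_cons] at hl
    have h := ih hl.2
    simp only [edgeListVec, List.map_cons, List.sum_cons, Pi.add_apply, List.mem_cons] at h ⊢
    rw [h]
    by_cases hea : e = a
    · subst hea
      simp [hl.1]
    · simp [hea]

/-- `x` is the indicator vector of a cycle of `G` of length at most four. -/
def IsShortCycleVec (G : SimpleGraph V) (x : Sym2 V → ZMod 2) : Prop :=
  ∃ (v : V) (w : G.Walk v v), w.IsCycle ∧ w.length ≤ 4 ∧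
    ∀ e, x e = if e ∈ w.edges then 1 else 0

lemma IsShortCycleVec.isCycleVec {G : SimpleGraph V} {x : Sym2 V → ZMod 2}
    (h : IsShortCycleVec G x) : IsCycleVec G x := by
  obtain ⟨v, w, hw, -, hx⟩ := h
  exact ⟨v, w, hw, hx⟩

lemma isShortCycleVec_triangle {G : SimpleGraph V} {a b c : V}
    (hca : G.Adj c a) (hab : G.Adj a b) (hcb : G.Adj c b) :
    IsShortCycleVec G (triangleVec c a b) := by
  have hc : (SimpleGraph.Walk.cons hca (.cons hab (.cons hcb.symm .nil))).IsCycle := by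
    have := hca.ne; have := hab.ne; have := hcb.ne
    simp [SimpleGraph.Walk.isCycle_def, SimpleGraph.Walk.isTrail_def]
    grind
  refine ⟨c, _, hc, by simp, fun e => ?_⟩
  rw [← edgeListVec_apply hc.isTrail.edges_nodup]
  simp [edgeListVec, triangleVec, edgeVec, Sym2.eq_swap (a := b) (b := c), add_assoc]

lemma isShortCycleVec_square {G : SimpleGraph V} {a b c v : V}
    (hca : G.Adj c a) (hav : G.Adj a v) (hvb : G.Adj v b) (hbc : G.Adj b c)
    (hab : a ≠ b) (hcv : c ≠ v) :
    IsShortCycleVec G (edgeVec c a + edgeVec a v + edgeVec v b + edgeVec b c) := by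
  have hc : (SimpleGraph.Walk.cons hca (.cons hav (.cons hvb (.cons hbc .nil)))).IsCycle := by
    have := hca.ne; have := hav.ne; have := hvb.ne; have := hbc.ne
    simp [SimpleGraph.Walk.isCycle_def, SimpleGraph.Walk.isTrail_def]
    grind
  refine ⟨c, _, hc, by simp, fun e => ?_⟩
  rw [← edgeListVec_apply hc.isTrail.edges_nodup]
  simp [edgeListVec, edgeVec, add_assoc]

/-- A submodule containing the triangles formed by `c` and the edges of `G` avoiding `c` contains
the cycle space of `G`. -/
lemma cycleSpace_le_of_triangleVec_mem {G : SimpleGraph V} (c : V)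
    (S : Submodule (ZMod 2) (Sym2 V → ZMod 2))
    (hS : ∀ a b, a ≠ c → b ≠ c → G.Adj a b → triangleVec c a b ∈ S) :
    cycleSpace G ≤ S := by
  let r : V → Sym2 V → ZMod 2 := fun a => if a = c then 0 else edgeVec c a
  have step : ∀ a b, G.Adj a b → r a + edgeVec a b + r b ∈ S := by
    intro a b hab
    by_cases ha : a = c
    · subst ha
      simp [r, hab.ne.symm, zmod_two_add_self]
    by_cases hb : b = c
    · subst hb
      simp [r, ha, edgeVec_comm, zmod_two_add_self]
    · simpa [r, ha, hb, triangleVec] using hS a b ha hb hab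
  have key : ∀ a b (w : G.Walk a b), r a + edgeListVec w.edges + r b ∈ S := by
    intro a b w
    induction w with
    | nil => simp [edgeListVec, zmod_two_add_self]
    | @cons u v w h p ih =>
      have := S.add_mem (step _ _ h) ih
      convert this using 1
      have h2 : r v + r v = 0 := zmod_two_add_self _
      simp only [edgeListVec, edgeVec, SimpleGraph.Walk.edges_cons, List.map_cons, List.sum_cons]
      linear_combination -h2
  refine Submodule.span_le.2 ?_
  rintro x ⟨v, w, hw, hx⟩
  have h := key v v w
  have hxe : x = edgeListVec w.edges := by
    ext e
    rw [hx, edgeListVec_apply hw.isTrail.edges_nodup]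
  have h2 : r v + r v = 0 := zmod_two_add_self _
  rw [SetLike.mem_coe, hxe]
  convert h using 1
  linear_combination -h2

/-- A family of vectors that is triangular with respect to a choice of pivots is linearly
independent. -/
lemma linearIndepOn_of_pivot {ι κ R : Type*} [Ring R] (I : Finset ι) (b : ι → κ → R)
    (k : ι → κ) (r : ι → ℕ) (hk : ∀ i ∈ I, b i (k i) = 1)
    (hr : ∀ i ∈ I, ∀ j ∈ I, b j (k i) ≠ 0 → j ≠ i → r i < r j) :
    LinearIndepOn R b (I : Set ι) := by
  classical
  rw [linearIndepOn_finset_iff]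
  intro g hg
  by_contra! hne
  obtain ⟨i₀, hi₀, hgi₀⟩ := hne
  obtain ⟨i, hi, hmax⟩ := (I.filter fun i => g i ≠ 0).exists_max_image r
    ⟨i₀, by simp [hi₀, hgi₀]⟩
  rw [mem_filter] at hi
  have h := congrFun hg (k i)
  rw [Finset.sum_apply, Finset.sum_eq_single i] at h
  · simp [hk i hi.1, hi.2] at h
  · intro j hj hji
    by_contra hz
    simp only [Pi.smul_apply, smul_eq_mul] at hz
    have hgj : g j ≠ 0 := left_ne_zero_of_mul hz
    have := hr i hi.1 j hj (right_ne_zero_of_mul hz) hji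
    have := hmax j (by simp [hj, hgj])
    omega
  · exact fun h => absurd hi.1 h

/-- `G` has a cycle basis of cycles of length at most four in which each edge occurs at most
four times. -/
def HasSparseCycleBasis (G : SimpleGraph V) : Prop :=
  ∃ B : Finset (Sym2 V → ZMod 2),
    (∀ x ∈ B, IsShortCycleVec G x) ∧
    LinearIndependent (ZMod 2) ((↑) : B → (Sym2 V → ZMod 2)) ∧
    Submodule.span (ZMod 2) (B : Set (Sym2 V → ZMod 2)) = cycleSpace G ∧
    (∀ e ∈ G.edgeSet, (B.filter fun x => x e = 1).card ≤ 4)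

lemma exists_isCycle_of_iso {W : Type*} [DecidableEq W] {G : SimpleGraph V}
    {H : SimpleGraph W} (f : G ≃g H) {x : Sym2 V → ZMod 2} {v : V} {w : G.Walk v v}
    (hw : w.IsCycle) (hx : ∀ e, x e = if e ∈ w.edges then 1 else 0) :
    ∃ (v' : W) (w' : H.Walk v' v'), w'.IsCycle ∧ w'.length = w.length ∧
      ∀ e, (x ∘ Sym2.map f.symm) e = if e ∈ w'.edges then 1 else 0 := by
  refine ⟨f v, w.map f.toHom, hw.map f.injective, by simp, fun e => ?_⟩
  rw [Function.comp_apply, hx, SimpleGraph.Walk.edges_map]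
  congr 1
  rw [eq_iff_iff, List.mem_map]
  constructor
  · intro h
    refine ⟨_, h, ?_⟩
    induction e with | _ a b => simp
  · rintro ⟨e, he, rfl⟩
    induction e with | _ a b => simpa using he

lemma IsShortCycleVec.map_iso {W : Type*} [DecidableEq W] {G : SimpleGraph V}
    {H : SimpleGraph W} (f : G ≃g H) {x : Sym2 V → ZMod 2} (hx : IsShortCycleVec G x) :
    IsShortCycleVec H (x ∘ Sym2.map f.symm) := by
  obtain ⟨v, w, hw, hl, hx⟩ := hx
  obtain ⟨v', w', hw', hl', hx'⟩ := exists_isCycle_of_iso f hw hx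
  exact ⟨v', w', hw', hl'.trans_le hl, hx'⟩

lemma IsCycleVec.map_iso {W : Type*} [DecidableEq W] {G : SimpleGraph V}
    {H : SimpleGraph W} (f : G ≃g H) {x : Sym2 V → ZMod 2} (hx : IsCycleVec G x) :
    IsCycleVec H (x ∘ Sym2.map f.symm) := by
  obtain ⟨v, w, hw, hx⟩ := hx
  obtain ⟨v', w', hw', -, hx'⟩ := exists_isCycle_of_iso f hw hx
  exact ⟨v', w', hw', hx'⟩

lemma HasSparseCycleBasis.map_iso {W : Type*} [DecidableEq W] {G : SimpleGraph V}
    {H : SimpleGraph W} (f : G ≃g H) (hG : HasSparseCycleBasis G) : HasSparseCycleBasis H := by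
  classical
  obtain ⟨B, hB, hli, hspan, hcard⟩ := hG
  let L : (Sym2 V → ZMod 2) →ₗ[ZMod 2] (Sym2 W → ZMod 2) :=
    LinearMap.funLeft _ _ (Sym2.map f.symm)
  have hsymm : ∀ x : Sym2 W → ZMod 2, (x ∘ Sym2.map f) ∘ Sym2.map f.symm = x := by
    intro x
    ext e
    induction e with | _ a b => simp
  have hL : Function.Injective L :=
    LinearMap.funLeft_injective_of_surjective _ _ _ fun e =>
      ⟨Sym2.map f e, by induction e with | _ a b => simp⟩
  refine ⟨B.image L, ?_, ?_, ?_, ?_⟩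
  · simp only [mem_image, forall_exists_index, and_imp, forall_apply_eq_imp_iff₂]
    exact fun x hx => (hB x hx).map_iso f
  · have h1 : LinearIndepOn (ZMod 2) id (B : Set (Sym2 V → ZMod 2)) := hli
    have h2 : LinearIndepOn (ZMod 2) id (L '' (B : Set (Sym2 V → ZMod 2))) :=
      (h1.map_injOn L hL.injOn).id_image
    rw [← coe_image] at h2
    exact h2
  · rw [coe_image, Submodule.span_image, hspan, cycleSpace, Submodule.map_span, cycleSpace]
    congr 1
    ext x
    constructor
    · rintro ⟨y, hy, rfl⟩
      exact IsCycleVec.map_iso f hy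
    · intro hx
      exact ⟨_, IsCycleVec.map_iso f.symm hx, hsymm x⟩
  · intro e he
    rw [filter_image]
    refine card_image_le.trans (hcard (Sym2.map f.symm e) ?_)
    induction e with | _ a b => simpa using f.symm.map_adj_iff.2 he

end General

section Construction

/-- A function sending each element satisfying `P` to the preceding one. -/
lemma exists_predecessor {n : ℕ} (P : Fin n → Prop) :
    ∃ p : Fin n → Option (Fin n),
      (∀ w w', p w = some w' → P w' ∧ w' < w) ∧
      (∀ w₁ w₂, P w₁ → P w₂ → p w₁ = p w₂ → w₁ = w₂) := by
  classical
  have h : ∀ w, ∃ o : Option (Fin n), (∀ w', o = some w' → P w' ∧ w' < w) ∧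
      ∀ a, P a → a < w → ∃ w', o = some w' ∧ a ≤ w' := by
    intro w
    by_cases hne : (univ.filter fun a => P a ∧ a < w).Nonempty
    · refine ⟨some ((univ.filter fun a => P a ∧ a < w).max' hne), ?_, fun a ha haw =>
        ⟨_, rfl, le_max' _ _ (by simp [ha, haw])⟩⟩
      have := max'_mem _ hne
      simp only [mem_filter] at this
      grind
    · refine ⟨none, by simp, fun a ha haw => (hne ⟨a, by simp [ha, haw]⟩).elim⟩
  choose p hp hmax using h
  refine ⟨p, hp, fun w₁ w₂ h₁ h₂ heq => ?_⟩
  rcases lt_trichotomy w₁ w₂ with hlt | rfl | hlt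
  · obtain ⟨w', hw', hle⟩ := hmax w₂ w₁ h₁ hlt
    exact absurd (hp w₁ w' (heq.trans hw')).2 hle.not_gt
  · rfl
  · obtain ⟨w', hw', hle⟩ := hmax w₁ w₂ h₂ hlt
    exact absurd (hp w₂ w' (heq.symm.trans hw')).2 hle.not_gt

variable {n : ℕ}

/-- The vertices of the cone: an apex, the vertices of the original graph, and one midpoint for
each unordered pair of vertices. -/
abbrev ConeVertex (n : ℕ) : Type := Option (Fin n ⊕ Sym2 (Fin n))

/-- The copy of an original vertex in the cone. -/
abbrev ConeVertex.vtx (v : Fin n) : ConeVertex n := some (Sum.inl v)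

/-- The midpoint of a pair of vertices in the cone. -/
abbrev ConeVertex.mid (v w : Fin n) : ConeVertex n := some (Sum.inr s(v, w))

open ConeVertex

/-- The graph obtained from `G` by attaching a triangle to each edge and then adding an apex
adjacent to everything. -/
def coneGraph (G : SimpleGraph (Fin n)) : SimpleGraph (ConeVertex n) where
  Adj
    | none, none => False
    | none, some _ => True
    | some _, none => True
    | some (.inl u), some (.inl v) => G.Adj u v
    | some (.inl u), some (.inr s) => s ∈ G.edgeSet ∧ u ∈ s
    | some (.inr s), some (.inl u) => s ∈ G.edgeSet ∧ u ∈ s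
    | some (.inr _), some (.inr _) => False
  symm := ⟨by rintro (_ | u | s) (_ | v | t) h <;>
    first | exact h | exact SimpleGraph.Adj.symm (G := G) h⟩
  loopless := ⟨by rintro (_ | u | s) h <;> first | exact h | exact G.loopless.irrefl _ h⟩

lemma coneGraph_adj_none_some (G : SimpleGraph (Fin n)) (a : Fin n ⊕ Sym2 (Fin n)) :
    (coneGraph G).Adj none (some a) := trivial

lemma coneGraph_adj_vtx_mid {G : SimpleGraph (Fin n)} {v w : Fin n} (h : G.Adj v w) :
    (coneGraph G).Adj (vtx v) (mid v w) := ⟨h, Sym2.mem_mk_left v w⟩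

lemma coneGraph_adj_vtx_mid_right {G : SimpleGraph (Fin n)} {v w : Fin n} (h : G.Adj v w) :
    (coneGraph G).Adj (vtx w) (mid v w) := ⟨h, Sym2.mem_mk_right v w⟩

lemma coneGraph_adj_vtx_vtx {G : SimpleGraph (Fin n)} {v w : Fin n} (h : G.Adj v w) :
    (coneGraph G).Adj (vtx v) (vtx w) := h

lemma coneGraph_connected (G : SimpleGraph (Fin n)) : (coneGraph G).Connected := by
  have h : ∀ a, (coneGraph G).Reachable none a := by
    rintro (_ | a)
    · rfl
    · exact (coneGraph_adj_none_some G a).reachable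
  exact (SimpleGraph.connected_iff_exists_forall_reachable _).2 ⟨none, h⟩

/-- The inclusion of a graph in its cone, as an induced subgraph. -/
def coneGraphEmbedding (G : SimpleGraph (Fin n)) : G ↪g coneGraph G where
  toFun := vtx
  inj' u v h := by simpa using h
  map_rel_iff' := Iff.rfl

lemma card_coneVertex_le (hn : 0 < n) : Fintype.card (ConeVertex n) ≤ 3 * n ^ 2 := by
  have h : Fintype.card (Sym2 (Fin n)) ≤ Fintype.card (Fin n × Fin n) :=
    Fintype.card_le_of_surjective _ Sym2.mk_surjective
  simp only [Fintype.card_option, Fintype.card_sum, Fintype.card_prod, Fintype.card_fin] at h ⊢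
  nlinarith

lemma coneGraph_edgeSet_cases {G : SimpleGraph (Fin n)} {e : Sym2 (ConeVertex n)}
    (he : e ∈ (coneGraph G).edgeSet) :
    (∃ v, e = s(none, vtx v)) ∨ (∃ v w, e = s(none, mid v w)) ∨
      (∃ v w, e = s(vtx v, mid v w)) ∨ (∃ v w, e = s(vtx v, vtx w)) := by
  have key : ∀ (u : Fin n) (s : Sym2 (Fin n)), u ∈ s →
      ∃ v w, s(some (Sum.inl u), some (Sum.inr s)) = s(vtx v, mid v w) := by
    rintro u s ⟨w, rfl⟩
    exact ⟨u, w, rfl⟩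
  induction e with | _ a b
  rw [SimpleGraph.mem_edgeSet] at he
  rcases a with _ | u | s <;> rcases b with _ | v | t
  · exact he.elim
  · exact .inl ⟨v, rfl⟩
  · induction t with | _ v w => exact .inr (.inl ⟨v, w, rfl⟩)
  · exact .inl ⟨u, Sym2.eq_swap⟩
  · exact .inr (.inr (.inr ⟨u, v, rfl⟩))
  · exact .inr (.inr (.inl (key u t he.2)))
  · induction s with | _ v w => exact .inr (.inl ⟨v, w, Sym2.eq_swap⟩)
  · rw [Sym2.eq_swap]
    exact .inr (.inr (.inl (key v s he.2)))
  · exact he.elim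

/-- The triangle spanned by the apex, a vertex `v` and the midpoint of `v` and `w`. -/
def spokeVec (v w : Fin n) : Sym2 (ConeVertex n) → ZMod 2 :=
  triangleVec none (vtx v) (mid v w)

/-- The cells of the cone: for each dart `(v, w)` a square through the apex, `v` and two
consecutive midpoints at `v` (or a triangle, for the first midpoint), and for each edge `(v, w)`
the triangle on its two ends and its midpoint. -/
def coneCell (p : Fin n → Fin n → Option (Fin n)) :
    (Fin n × Fin n) ⊕ (Fin n × Fin n) → Sym2 (ConeVertex n) → ZMod 2
  | .inl q => spokeVec q.1 q.2 + (p q.1 q.2).elim 0 (spokeVec q.1)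
  | .inr q => triangleVec (mid q.1 q.2) (vtx q.1) (vtx q.2)

lemma spokeVec_none_vtx (a b v : Fin n) :
    spokeVec a b s(none, vtx v) = if v = a then 1 else 0 := by
  simp [spokeVec, triangleVec, edgeVec, Pi.single_apply]

lemma spokeVec_none_mid (a b v w : Fin n) :
    spokeVec a b s(none, mid v w) = if s(v, w) = s(a, b) then 1 else 0 := by
  simp [spokeVec, triangleVec, edgeVec, Pi.single_apply]

lemma spokeVec_vtx_mid (a b v w : Fin n) :
    spokeVec a b s(vtx v, mid v w) = if v = a ∧ w = b then 1 else 0 := by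
  simp [spokeVec, triangleVec, edgeVec, Pi.single_apply]
  grind

lemma spokeVec_vtx_vtx (a b v w : Fin n) : spokeVec a b s(vtx v, vtx w) = 0 := by
  simp [spokeVec, triangleVec, edgeVec]

lemma triangleVec_none (a b : Fin n) (x : ConeVertex n) :
    triangleVec (mid a b) (vtx a) (vtx b) s(none, x) = 0 := by
  simp [triangleVec, edgeVec]

lemma triangleVec_vtx_mid {a b v w : Fin n} (hab : a ≠ b) :
    triangleVec (mid a b) (vtx a) (vtx b) s(vtx v, mid v w) =
      if s(v, w) = s(a, b) then 1 else 0 := by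
  simp [triangleVec, edgeVec, Pi.single_apply]
  grind

lemma triangleVec_vtx_vtx (a b v w : Fin n) :
    triangleVec (mid a b) (vtx a) (vtx b) s(vtx v, vtx w) =
      if s(v, w) = s(a, b) then 1 else 0 := by
  simp [triangleVec, edgeVec, Pi.single_apply]

/-- The darts and the edges of `G`, which index the cells of the cone. -/
noncomputable def coneCellIndex (G : SimpleGraph (Fin n)) :
    Finset ((Fin n × Fin n) ⊕ (Fin n × Fin n)) := by
  classical
  exact univ.filter (Sum.elim (fun q => G.Adj q.1 q.2) fun q => G.Adj q.1 q.2 ∧ q.1 < q.2)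

lemma inl_mem_coneCellIndex {G : SimpleGraph (Fin n)} {v w : Fin n} :
    Sum.inl (v, w) ∈ coneCellIndex G ↔ G.Adj v w := by
  simp [coneCellIndex]

lemma inr_mem_coneCellIndex {G : SimpleGraph (Fin n)} {v w : Fin n} :
    Sum.inr (v, w) ∈ coneCellIndex G ↔ G.Adj v w ∧ v < w := by
  simp [coneCellIndex]

/-- `p v w` is a neighbor of `v` smaller than `w`, if defined, and determines the neighbor `w`
of `v`. -/
structure IsPredecessor (G : SimpleGraph (Fin n)) (p : Fin n → Fin n → Option (Fin n)) :
    Prop where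
  adj_lt : ∀ v w w', p v w = some w' → G.Adj v w' ∧ w' < w
  inj : ∀ v w₁ w₂, G.Adj v w₁ → G.Adj v w₂ → p v w₁ = p v w₂ → w₁ = w₂

lemma isShortCycleVec_coneCell {G : SimpleGraph (Fin n)} {p : Fin n → Fin n → Option (Fin n)}
    (hp : IsPredecessor G p) :
    ∀ i ∈ coneCellIndex G, IsShortCycleVec (coneGraph G) (coneCell p i) := by
  rintro (⟨v, w⟩ | ⟨v, w⟩) hi
  · rw [inl_mem_coneCellIndex] at hi
    cases hpw : p v w with
    | none =>
      simpa [coneCell, hpw, spokeVec] using isShortCycleVec_triangle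
        (coneGraph_adj_none_some G _) (coneGraph_adj_vtx_mid hi) (coneGraph_adj_none_some G _)
    | some w' =>
      obtain ⟨hw', hlt⟩ := hp.adj_lt v w w' hpw
      have hmid : mid v w ≠ mid v w' := by
        simp only [ne_eq, Option.some.injEq, Sum.inr.injEq, Sym2.congr_right]
        exact hlt.ne'
      have := isShortCycleVec_square (coneGraph_adj_none_some G _)
        (coneGraph_adj_vtx_mid hi).symm (coneGraph_adj_vtx_mid hw')
        (coneGraph_adj_none_some G _).symm hmid (by simp)
      convert this using 1
      have h2 := zmod_two_add_self (edgeVec (none : ConeVertex n) (vtx v))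
      simp only [coneCell, hpw, spokeVec, triangleVec, Option.elim_some]
      rw [edgeVec_comm (mid v w) (vtx v), edgeVec_comm (mid v w') none]
      linear_combination h2
  · rw [inr_mem_coneCellIndex] at hi
    exact isShortCycleVec_triangle (coneGraph_adj_vtx_mid hi.1).symm
      (coneGraph_adj_vtx_vtx hi.1) (coneGraph_adj_vtx_mid_right hi.1).symm

lemma linearIndepOn_coneCell {G : SimpleGraph (Fin n)} {p : Fin n → Fin n → Option (Fin n)}
    (hp : IsPredecessor G p) :
    LinearIndepOn (ZMod 2) (coneCell p) (coneCellIndex G : Set _) := by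
  refine linearIndepOn_of_pivot (coneCellIndex G) (coneCell p)
    (Sum.elim (fun q => s(vtx q.1, mid q.1 q.2)) fun q => s(vtx q.1, vtx q.2))
    (Sum.elim (fun q => q.2.val) fun _ => n) ?_ ?_
  · rintro (⟨v, w⟩ | ⟨v, w⟩) hi
    · cases hpw : p v w with
      | none => simp [coneCell, hpw, spokeVec_vtx_mid]
      | some w' => simp [coneCell, hpw, spokeVec_vtx_mid, (hp.adj_lt v w w' hpw).2.ne']
    · simp [coneCell, triangleVec_vtx_vtx]
  · rintro (⟨v, w⟩ | ⟨v, w⟩) hi (⟨v', w'⟩ | ⟨v', w'⟩) hj h hne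
    · cases hpw : p v' w' with
      | none =>
        simp only [coneCell, hpw, Sum.elim_inl, Option.elim_none, add_zero,
          spokeVec_vtx_mid] at h
        grind
      | some w'' =>
        have := (hp.adj_lt v' w' w'' hpw).2
        simp only [coneCell, hpw, Sum.elim_inl, Option.elim_some, Pi.add_apply,
          spokeVec_vtx_mid] at h
        simp only [Sum.elim_inl]
        grind
    · exact w.isLt
    · cases hpw : p v' w' <;> simp [coneCell, hpw, spokeVec_vtx_vtx] at h
    · rw [inr_mem_coneCellIndex] at hi hj
      simp only [coneCell, Sum.elim_inr, triangleVec_vtx_vtx] at h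
      grind

lemma spokeVec_mem_span {G : SimpleGraph (Fin n)} {p : Fin n → Fin n → Option (Fin n)}
    (hp : IsPredecessor G p) (v w : Fin n) (hvw : G.Adj v w) :
    spokeVec v w ∈ Submodule.span (ZMod 2) (coneCell p '' (coneCellIndex G : Set _)) := by
  induction w using WellFoundedLT.induction with
  | _ w ih =>
    have hcell := Submodule.subset_span (R := ZMod 2)
      (Set.mem_image_of_mem (coneCell p) (mem_coe.2 (inl_mem_coneCellIndex.2 hvw)))
    cases hpw : p v w with
    | none => simpa [coneCell, hpw] using hcell
    | some w' =>
      obtain ⟨hw', hlt⟩ := hp.adj_lt v w w' hpw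
      have := Submodule.sub_mem _ hcell (ih w' hlt hw')
      simpa [coneCell, hpw] using this

lemma cycleSpace_coneGraph_le {G : SimpleGraph (Fin n)} {p : Fin n → Fin n → Option (Fin n)}
    (hp : IsPredecessor G p) :
    cycleSpace (coneGraph G) ≤
      Submodule.span (ZMod 2) (coneCell p '' (coneCellIndex G : Set _)) := by
  have hvm : ∀ (u : Fin n) (s : Sym2 (Fin n)), s ∈ G.edgeSet → u ∈ s →
      triangleVec none (vtx u) (some (Sum.inr s)) ∈
        Submodule.span (ZMod 2) (coneCell p '' (coneCellIndex G : Set _)) := by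
    rintro u s hs ⟨w, rfl⟩
    exact spokeVec_mem_span hp u w hs
  have hcomm : ∀ a b c : ConeVertex n, triangleVec c a b = triangleVec c b a := by
    intro a b c
    rw [triangleVec, triangleVec, edgeVec_comm a b]
    ring
  have hlt : ∀ u v, G.Adj u v → u < v → triangleVec none (vtx u) (vtx v) ∈
      Submodule.span (ZMod 2) (coneCell p '' (coneCellIndex G : Set _)) := by
    intro u v huv hlt
    have hcell := Submodule.subset_span (R := ZMod 2)
      (Set.mem_image_of_mem (coneCell p) (mem_coe.2 (inr_mem_coneCellIndex.2 ⟨huv, hlt⟩)))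
    have := Submodule.add_mem _ hcell (Submodule.add_mem _ (hvm u s(u, v) huv (by simp))
      (hvm v s(u, v) huv (by simp)))
    convert this using 1
    simp only [coneCell, triangleVec]
    rw [edgeVec_comm (mid u v) (vtx u), edgeVec_comm (mid u v) (vtx v)]
    linear_combination -zmod_two_add_self (edgeVec (vtx u) (mid u v)) -
      zmod_two_add_self (edgeVec (vtx v) (mid u v)) -
      zmod_two_add_self (edgeVec none (mid u v))
  refine cycleSpace_le_of_triangleVec_mem none _ ?_
  rintro (_ | u | s) (_ | v | t) ha hb hab
  any_goals contradiction
  · rcases lt_or_gt_of_ne (G.ne_of_adj hab) with h | h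
    · exact hlt u v hab h
    · rw [hcomm]
      exact hlt v u (SimpleGraph.Adj.symm (G := G) hab) h
  · exact hvm u t hab.1 hab.2
  · rw [hcomm]
    exact hvm v s hab.1 hab.2

lemma coneCell_eq_one_cases {G : SimpleGraph (Fin n)} {p : Fin n → Fin n → Option (Fin n)}
    (hp : IsPredecessor G p) :
    ∀ e ∈ (coneGraph G).edgeSet, ∃ a b c d, ∀ i ∈ coneCellIndex G, coneCell p i e = 1 →
      i = a ∨ i = b ∨ i = c ∨ i = d := by
  have hsucc : ∀ v o, ∃ w', ∀ w, G.Adj v w → p v w = o → w = w' := by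
    intro v o
    by_cases h : ∃ w, G.Adj v w ∧ p v w = o
    · obtain ⟨w', hw', ho⟩ := h
      exact ⟨w', fun w hw hwo => hp.inj v w w' hw hw' (hwo.trans ho.symm)⟩
    · exact ⟨v, fun w hw hwo => (h ⟨w, hw, hwo⟩).elim⟩
  choose next hnext using hsucc
  intro e he
  rcases coneGraph_edgeSet_cases he with ⟨v, rfl⟩ | ⟨v, w, rfl⟩ | ⟨v, w, rfl⟩ | ⟨v, w, rfl⟩
  · refine ⟨.inl (v, next v none), .inl (v, v), .inl (v, v), .inl (v, v), ?_⟩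
    rintro (⟨a, b⟩ | ⟨a, b⟩) hi h
    · rw [inl_mem_coneCellIndex] at hi
      have := hnext a (p a b) b hi rfl
      cases hab : p a b with
      | none =>
        simp only [coneCell, hab, Option.elim_none, add_zero, spokeVec_none_vtx] at h
        grind
      | some b' =>
        simp only [coneCell, hab, Option.elim_some, Pi.add_apply, spokeVec_none_vtx] at h
        grind
    · simp [coneCell, triangleVec_none] at h
  · refine ⟨.inl (v, w), .inl (w, v), .inl (v, next v (some w)), .inl (w, next w (some v)), ?_⟩
    rintro (⟨a, b⟩ | ⟨a, b⟩) hi h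
    · rw [inl_mem_coneCellIndex] at hi
      have := hnext a (p a b) b hi rfl
      cases hab : p a b with
      | none =>
        simp only [coneCell, hab, Option.elim_none, add_zero, spokeVec_none_mid] at h
        grind
      | some b' =>
        simp only [coneCell, hab, Option.elim_some, Pi.add_apply, spokeVec_none_mid] at h
        grind
    · simp [coneCell, triangleVec_none] at h
  · refine ⟨.inl (v, w), .inl (v, next v (some w)), .inr (v, w), .inr (w, v), ?_⟩
    rintro (⟨a, b⟩ | ⟨a, b⟩) hi h
    · rw [inl_mem_coneCellIndex] at hi
      have := hnext a (p a b) b hi rfl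
      cases hab : p a b with
      | none =>
        simp only [coneCell, hab, Option.elim_none, add_zero, spokeVec_vtx_mid] at h
        grind
      | some b' =>
        simp only [coneCell, hab, Option.elim_some, Pi.add_apply, spokeVec_vtx_mid] at h
        grind
    · rw [inr_mem_coneCellIndex] at hi
      simp only [coneCell, triangleVec_vtx_mid hi.2.ne] at h
      grind
  · refine ⟨.inr (v, w), .inr (w, v), .inr (v, w), .inr (v, w), ?_⟩
    rintro (⟨a, b⟩ | ⟨a, b⟩) hi h
    · cases hab : p a b <;> simp [coneCell, hab, spokeVec_vtx_vtx] at h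
    · simp only [coneCell, triangleVec_vtx_vtx] at h
      grind

lemma hasSparseCycleBasis_coneGraph (G : SimpleGraph (Fin n)) :
    HasSparseCycleBasis (coneGraph G) := by
  classical
  choose p hsome hinj using fun v => exists_predecessor (G.Adj v)
  have hp : IsPredecessor G p := ⟨hsome, hinj⟩
  refine ⟨(coneCellIndex G).image (coneCell p),
    forall_mem_image.2 (isShortCycleVec_coneCell hp), ?_, ?_, ?_⟩
  · have := (linearIndepOn_coneCell hp).id_image
    rw [← coe_image] at this
    exact this
  · rw [coe_image]
    refine le_antisymm (Submodule.span_le.2 ?_) (cycleSpace_coneGraph_le hp)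
    rintro _ ⟨i, hi, rfl⟩
    exact Submodule.subset_span (isShortCycleVec_coneCell hp i hi).isCycleVec
  · intro e he
    obtain ⟨a, b, c, d, h⟩ := coneCell_eq_one_cases hp e he
    rw [filter_image]
    refine card_image_le.trans ((card_le_card (t := {a, b, c, d}) ?_).trans card_le_four)
    intro i hi
    rw [mem_filter] at hi
    simpa using h i hi.1 hi.2

end Construction

end SparseCycleBasis

/-- For every degree bound `d` there is a constant `C` such that: every
connected graph `G` of maximum degree at most `d` on `n` vertices embeds as an induced
subgraph into a connected graph `Ĝ` on `N ≤ C·n²` vertices which admits a cycle basis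
consisting of cycles of length at most 4, with every edge of `Ĝ` lying in at most 4 basis
cycles. -/
theorem exists_local_sparse_cycle_basis_supergraph (d : ℕ) :
    ∃ C : ℕ, 0 < C ∧ ∀ (n : ℕ) (G : SimpleGraph (Fin n)),
      G.Connected → (∀ v, (G.neighborSet v).ncard ≤ d) →
      ∃ N : ℕ, N ≤ C * n ^ 2 ∧ ∃ Ghat : SimpleGraph (Fin N),
        Ghat.Connected ∧ Nonempty (G ↪g Ghat) ∧
        ∃ B : Finset (Sym2 (Fin N) → ZMod 2),
          (∀ x ∈ B, ∃ (v : Fin N) (w : Ghat.Walk v v), w.IsCycle ∧ w.length ≤ 4 ∧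
            ∀ e, x e = if e ∈ w.edges then 1 else 0) ∧
          LinearIndependent (ZMod 2) ((↑) : B → (Sym2 (Fin N) → ZMod 2)) ∧
          Submodule.span (ZMod 2) (B : Set (Sym2 (Fin N) → ZMod 2)) = cycleSpace Ghat ∧
          (∀ e ∈ Ghat.edgeSet, (B.filter fun x => x e = 1).card ≤ 4) := by
  refine ⟨3, by norm_num, fun n G hG _ => ?_⟩
  have hn : 0 < n := Fin.pos_iff_nonempty.2 hG.nonempty
  let f := SimpleGraph.Iso.map (Fintype.equivFin (ConeVertex n)) (coneGraph G)
  exact ⟨_, card_coneVertex_le hn, _, f.connected_iff.1 (coneGraph_connected G),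
    ⟨f.toEmbedding.comp (coneGraphEmbedding G)⟩, (hasSparseCycleBasis_coneGraph G).map_iso f⟩
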